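/- In any execution of the call-by-need Storeless Abstract Machine from an initial configuration (t̄₀, ⟨·⟩)_term, every maximal subsequence of consecutive transitions consisting solely of instances of rule (1) (the transition (t̄ū, E)_term →_o (t̄, E⟨⟨·⟩ū⟩)_term) has length at most |t̄₀|, the size of the initial term. -/

import Mathlib

/-!
A transition of rule (1) replaces the term under focus by its left immediate subterm, so a run of
such transitions is at most as long as the size of the term at its start (`Exec.length_r1_le`).
It remains to bound the size of the terms ever put under focus. Let a configuration be `N`-bounded
if its focused term and all side terms of its evaluation context have size at most `N`. Every rule
preserves `N`-boundedness (`Step.bounded`), since terms are only decomposed, moved between focus and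
context, or replaced by an α-equivalent copy, which has the same size (`Term.AlphaEq.size_eq`).
The initial configuration is `|t₀|`-bounded, hence so is every configuration of the execution.
-/

namespace SAM

/-- Terms of the λ-calculus with explicit substitutions:
`t ::= x | λx.t | t t | t[x←t]` (`esub t x u` denotes `t[x←u]`). -/
inductive Term : Type
  | var : ℕ → Term
  | lam : ℕ → Term → Term
  | app : Term → Term → Term
  | esub : Term → ℕ → Term → Term
  deriving DecidableEq

namespace Term

/-- Pure terms contain no explicit substitutions. -/
def Pure : Term → Prop
  | var _ => True
  | lam _ t => t.Pure
  | app t u => t.Pure ∧ u.Pure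
  | esub _ _ _ => False

/-- Pure values are abstractions of pure terms. -/
def IsPureValue : Term → Prop
  | lam _ t => t.Pure
  | _ => False

/-- The multiset of free variables of a term. -/
def fv : Term → Multiset ℕ
  | var x => {x}
  | lam x t => t.fv.filter (· ≠ x)
  | app t u => t.fv + u.fv
  | esub t x u => t.fv.filter (· ≠ x) + u.fv

/-- The size of a term. -/
def size : Term → ℕ
  | var _ => 1
  | lam _ t => t.size + 1
  | app t u => t.size + u.size + 1
  | esub t _ u => t.size + u.size + 1

/-- The multiset of variables bound (by λ or by an explicit substitution) in a term. -/
def binders : Term → Multiset ℕ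
  | var _ => 0
  | lam x t => x ::ₘ t.binders
  | app t u => t.binders + u.binders
  | esub t x u => x ::ₘ (t.binders + u.binders)

/-- The multiset of all variables occurring (free, bound or binding) in a term. -/
def vars : Term → Multiset ℕ
  | var x => {x}
  | lam x t => x ::ₘ t.vars
  | app t u => t.vars + u.vars
  | esub t x u => x ::ₘ (t.vars + u.vars)

/-- The number of explicit-substitution constructors occurring in a term. -/
def esubCount : Term → ℕ
  | var _ => 0
  | lam _ t => t.esubCount
  | app t u => t.esubCount + u.esubCount
  | esub t _ u => t.esubCount + u.esubCount + 1

/-- A term is closed if it has no free variables. -/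
def Closed (t : Term) : Prop := t.fv = 0

/-- A term is well-named if each variable is bound at most once in it and
no bound variable of it occurs among its free variables. -/
def WellNamed (t : Term) : Prop :=
  t.binders.Nodup ∧ ∀ x ∈ t.binders, x ∉ t.fv

/-- de Bruijn skeletons, used to define α-equivalence. -/
inductive DB : Type
  | bvar : ℕ → DB
  | fvar : ℕ → DB
  | lam : DB → DB
  | app : DB → DB → DB
  | esub : DB → DB → DB
  deriving DecidableEq

/-- Index of a variable in a list of binders. -/
def dbIndex (x : ℕ) : List ℕ → Option ℕ
  | [] => none
  | y :: Γ => if x = y then some 0 else (dbIndex x Γ).map (· + 1)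

/-- Conversion to de Bruijn skeleton, relative to a list of enclosing binders. -/
def toDB : Term → List ℕ → DB
  | var x, Γ =>
      match dbIndex x Γ with
      | some n => DB.bvar n
      | none => DB.fvar x
  | lam x t, Γ => DB.lam (t.toDB (x :: Γ))
  | app t u, Γ => DB.app (t.toDB Γ) (u.toDB Γ)
  | esub t x u, Γ => DB.esub (t.toDB (x :: Γ)) (u.toDB Γ)

/-- α-equivalence of terms. -/
def AlphaEq (t u : Term) : Prop := t.toDB [] = u.toDB []

/-- The (reflexive) sub-term relation. -/
inductive Subterm : Term → Term → Prop
  | refl (t) : Subterm t t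
  | lam {s t} (x) : Subterm s t → Subterm s (Term.lam x t)
  | appL {s t} (u) : Subterm s t → Subterm s (Term.app t u)
  | appR (t) {s u} : Subterm s u → Subterm s (Term.app t u)
  | esubL {s t} (x) (u) : Subterm s t → Subterm s (Term.esub t x u)
  | esubR (t) (x) {s u} : Subterm s u → Subterm s (Term.esub t x u)

/-- `s` is a sub-term of `t` up to α-equivalence. -/
def SubtermUpToAlpha (s t : Term) : Prop := ∃ s', Subterm s' t ∧ AlphaEq s s'

/-- `v'` is a copy of `v` whose bound variables are renamed to distinct
fresh variables, avoiding the variables in `avoid`. -/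
def IsFreshCopy (v v' : Term) (avoid : Multiset ℕ) : Prop :=
  AlphaEq v v' ∧ v'.Pure ∧ v'.binders.Nodup ∧ ∀ x ∈ v'.binders, x ∉ avoid

end Term

/-- Evaluation contexts:
`E ::= ⟨·⟩ | E t̄ | E[x←t̄] | E'⟨x⟩[x←E]`
(`sub2 E' x E` denotes `E'⟨x⟩[x←E]`; purity of the side terms is
imposed by the well-formedness predicate `ECtx.WF`). -/
inductive ECtx : Type
  | hole : ECtx
  | app : ECtx → Term → ECtx
  | esub : ECtx → ℕ → Term → ECtx
  | sub2 : ECtx → ℕ → ECtx → ECtx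
  deriving DecidableEq

namespace ECtx

/-- Well-formedness: all side terms in an evaluation context are pure,
as required by the grammar. -/
def WF : ECtx → Prop
  | hole => True
  | app E t => E.WF ∧ t.Pure
  | esub E _ t => E.WF ∧ t.Pure
  | sub2 E' _ E => E'.WF ∧ E.WF

/-- Substitution contexts `A ::= ⟨·⟩ | A[x←t̄]`. -/
inductive IsSubst : ECtx → Prop
  | hole : IsSubst ECtx.hole
  | esub {A : ECtx} (x : ℕ) {t : Term} :
      t.Pure → IsSubst A → IsSubst (ECtx.esub A x t)

/-- Plugging a term into the hole of an evaluation context. -/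
def plug : ECtx → Term → Term
  | hole, t => t
  | app E u, t => Term.app (E.plug t) u
  | esub E x u, t => Term.esub (E.plug t) x u
  | sub2 E' x E, t => Term.esub (E'.plug (Term.var x)) x (E.plug t)

/-- Plugging an evaluation context into the hole of an evaluation context. -/
def plugC : ECtx → ECtx → ECtx
  | hole, F => F
  | app E u, F => app (E.plugC F) u
  | esub E x u, F => esub (E.plugC F) x u
  | sub2 E' x E, F => sub2 E' x (E.plugC F)

/-- The multiset `FV_M(E)` of free variables of an evaluation context,
relative to a multiset `M` for the hole. -/
def fv : ECtx → Multiset ℕ → Multiset ℕ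
  | hole, M => M
  | app E t, M => E.fv M + t.fv
  | esub E x t, M => (E.fv M).filter (· ≠ x) + t.fv
  | sub2 E' x E, M => (E'.fv {x}).filter (· ≠ x) + E.fv M

end ECtx

/-- Configurations are tagged `term` or `ctxt`. -/
inductive Tag : Type
  | term | ctxt
  deriving DecidableEq

/-- A configuration of the SAM: a (pure) term, an evaluation context, and a tag. -/
structure Config : Type where
  t : Term
  E : ECtx
  tag : Tag
  deriving DecidableEq

/-- The six rules of the SAM. -/
inductive Rule : Type
  | r1 | r2 | r3 | r4 | r5 | r6
  deriving DecidableEq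

/-- Labels of SAM transitions. -/
inductive Label : Type
  | b | s | o
  deriving DecidableEq

/-- The label of each rule: rules (1)–(3) are overhead, rule (4) is beta,
rules (5)–(6) are substitution. -/
def Rule.label : Rule → Label
  | .r1 => .o
  | .r2 => .o
  | .r3 => .o
  | .r4 => .b
  | .r5 => .s
  | .r6 => .s

/-- The labelled transition system of the call-by-need Storeless Abstract Machine. -/
inductive Step : Config → Rule → Config → Prop
  /-- (1) (t̄ū, E)_term →_o (t̄, E⟨⟨·⟩ū⟩)_term -/
  | r1 {t u : Term} {E : ECtx} :
      t.Pure → u.Pure → E.WF →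
      Step ⟨Term.app t u, E, Tag.term⟩ Rule.r1
           ⟨t, E.plugC (ECtx.app ECtx.hole u), Tag.term⟩
  /-- (2) (x, E₁⟨E₂[x←t̄]⟩)_term →_o (t̄, E₁⟨E₂⟨x⟩[x←⟨·⟩]⟩)_term -/
  | r2 {x : ℕ} {t : Term} {E₁ E₂ : ECtx} :
      t.Pure → E₁.WF → E₂.WF →
      Step ⟨Term.var x, E₁.plugC (ECtx.esub E₂ x t), Tag.term⟩ Rule.r2
           ⟨t, E₁.plugC (ECtx.sub2 E₂ x ECtx.hole), Tag.term⟩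
  /-- (3) (v̄, E)_term →_o (v̄, E)_ctxt -/
  | r3 {v : Term} {E : ECtx} :
      v.IsPureValue → E.WF →
      Step ⟨v, E, Tag.term⟩ Rule.r3 ⟨v, E, Tag.ctxt⟩
  /-- (4) (λx.t̄, E⟨A⟨·⟩ū⟩)_ctxt →_b (t̄, E⟨A⟨⟨·⟩[x←ū]⟩⟩)_term -/
  | r4 {x : ℕ} {t u : Term} {E A : ECtx} :
      t.Pure → u.Pure → E.WF → A.IsSubst →
      Step ⟨Term.lam x t, E.plugC (ECtx.app A u), Tag.ctxt⟩ Rule.r4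
           ⟨t, E.plugC (A.plugC (ECtx.esub ECtx.hole x u)), Tag.term⟩
  /-- (5) (v̄, E₁⟨E₂⟨x⟩[x←A]⟩)_ctxt →_s (v̄^≈, E₁⟨A⟨E₂[x←v̄]⟩⟩)_ctxt, if x ∈ FV_∅(E₂),
  where v̄^≈ is a fresh copy of v̄ avoiding all variables of the configuration. -/
  | r5 {x : ℕ} {v v' : Term} {E₁ E₂ A : ECtx} :
      v.IsPureValue → E₁.WF → E₂.WF → A.IsSubst →
      x ∈ E₂.fv 0 →
      v.IsFreshCopy v' ((E₁.plugC (ECtx.sub2 E₂ x A)).plug v).vars →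
      Step ⟨v, E₁.plugC (ECtx.sub2 E₂ x A), Tag.ctxt⟩ Rule.r5
           ⟨v', E₁.plugC (A.plugC (ECtx.esub E₂ x v)), Tag.ctxt⟩
  /-- (6) (v̄, E₁⟨E₂⟨x⟩[x←A]⟩)_ctxt →_s (v̄, E₁⟨A⟨E₂⟩⟩)_ctxt, if x ∉ FV_∅(E₂). -/
  | r6 {x : ℕ} {v : Term} {E₁ E₂ A : ECtx} :
      v.IsPureValue → E₁.WF → E₂.WF → A.IsSubst →
      x ∉ E₂.fv 0 →
      Step ⟨v, E₁.plugC (ECtx.sub2 E₂ x A), Tag.ctxt⟩ Rule.r6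
           ⟨v, E₁.plugC (A.plugC E₂), Tag.ctxt⟩

/-- A finite execution: a sequence of SAM transitions, recorded by its trace of rules. -/
inductive Exec : Config → List Rule → Config → Prop
  | nil (c : Config) : Exec c [] c
  | cons {c c' c'' : Config} {r : Rule} {rs : List Rule} :
      Step c r c' → Exec c' rs c'' → Exec c (r :: rs) c''

/-- `|e|_ℓ`: the number of transitions labelled `ℓ` occurring in an execution trace. -/
def labelCount (e : List Rule) (ℓ : Label) : ℕ := (e.map Rule.label).count ℓ

/-- A term may serve as the initial term of an initial configuration:
it is pure, closed and well-named. -/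
def InitialTerm (t : Term) : Prop := t.Pure ∧ t.Closed ∧ t.WellNamed

/-- A configuration is reachable if some execution from an initial configuration ends at it. -/
def Reachable (c : Config) : Prop :=
  ∃ (t₀ : Term) (e : List Rule),
    InitialTerm t₀ ∧ Exec ⟨t₀, ECtx.hole, Tag.term⟩ e c

/-- The number of maximal subsequences of consecutive transitions consisting
solely of instances of rule (1) in a trace (each such run is counted at its
last element). -/
def countR1Runs : List Rule → ℕ
  | [] => 0
  | [r] => if r = Rule.r1 then 1 else 0
  | r :: r' :: rs =>
      (if r = Rule.r1 ∧ r' ≠ Rule.r1 then 1 else 0) + countR1Runs (r' :: rs)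


/-- The size of a de Bruijn skeleton, matching `Term.size`. -/
def Term.DB.size : Term.DB → ℕ
  | .bvar _ => 1
  | .fvar _ => 1
  | .lam t => t.size + 1
  | .app t u => t.size + u.size + 1
  | .esub t u => t.size + u.size + 1

theorem Term.size_toDB (t : Term) (Γ : List ℕ) : (t.toDB Γ).size = t.size := by
  induction t generalizing Γ with
  | var x =>
    simp only [Term.toDB]
    split <;> rfl
  | lam x t ih => simp [Term.toDB, Term.DB.size, Term.size, ih]
  | app t u iht ihu => simp [Term.toDB, Term.DB.size, Term.size, iht, ihu]
  | esub t x u iht ihu => simp [Term.toDB, Term.DB.size, Term.size, iht, ihu]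

theorem Term.AlphaEq.size_eq {t u : Term} (h : t.AlphaEq u) : t.size = u.size := by
  rw [← Term.size_toDB t [], ← Term.size_toDB u []]
  exact congrArg Term.DB.size h

/-- All side terms of an evaluation context have size at most `N`. -/
def ECtx.Bounded (N : ℕ) : ECtx → Prop
  | hole => True
  | app E t => E.Bounded N ∧ t.size ≤ N
  | esub E _ t => E.Bounded N ∧ t.size ≤ N
  | sub2 E' _ E => E'.Bounded N ∧ E.Bounded N

theorem ECtx.bounded_plugC {N : ℕ} (E F : ECtx) :
    (E.plugC F).Bounded N ↔ E.Bounded N ∧ F.Bounded N := by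
  induction E with
  | hole => simp [ECtx.plugC, ECtx.Bounded]
  | app E t ih => simp only [ECtx.plugC, ECtx.Bounded, ih]; tauto
  | esub E x t ih => simp only [ECtx.plugC, ECtx.Bounded, ih]; tauto
  | sub2 E' x E _ ih => simp only [ECtx.plugC, ECtx.Bounded, ih]; tauto

/-- The focused term and all side terms of the evaluation context have size at most `N`. -/
def Config.Bounded (N : ℕ) (c : Config) : Prop := c.t.size ≤ N ∧ c.E.Bounded N

theorem Step.bounded {N : ℕ} {c c' : Config} {r : Rule} (h : Step c r c')
    (hc : c.Bounded N) : c'.Bounded N := by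
  cases h with
  | r5 _ _ _ _ _ hcopy =>
    have := hcopy.1.size_eq
    simp only [Config.Bounded, ECtx.bounded_plugC, ECtx.Bounded] at hc ⊢
    grind
  | _ =>
    simp only [Config.Bounded, ECtx.bounded_plugC, ECtx.Bounded, Term.size] at hc ⊢
    grind

theorem Exec.bounded {N : ℕ} {c c' : Config} {e : List Rule} (h : Exec c e c')
    (hc : c.Bounded N) : c'.Bounded N := by
  induction h with
  | nil => exact hc
  | cons hstep _ ih => exact ih (hstep.bounded hc)

theorem Exec.of_append {c c'' : Config} {e₁ e₂ : List Rule} (h : Exec c (e₁ ++ e₂) c'') :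
    ∃ c', Exec c e₁ c' ∧ Exec c' e₂ c'' := by
  induction e₁ generalizing c with
  | nil => exact ⟨c, .nil c, h⟩
  | cons r e₁ ih =>
    cases h with
    | cons hstep hrest =>
      obtain ⟨c', h₁, h₂⟩ := ih hrest
      exact ⟨c', .cons hstep h₁, h₂⟩

/-- Rule (1) strictly decreases the size of the focused term, which bounds the length of a run. -/
theorem Exec.length_r1_le {c c' : Config} {e : List Rule} (h : Exec c e c')
    (he : ∀ r ∈ e, r = Rule.r1) : e.length ≤ c.t.size := by
  induction h with
  | nil => simp
  | cons hstep _ ih =>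
    obtain rfl := he _ List.mem_cons_self
    have hlen := ih fun r hr => he r (List.mem_cons_of_mem _ hr)
    cases hstep with
    | r1 =>
      simp only [List.length_cons, Term.size] at hlen ⊢
      omega

/-- In any execution from an initial configuration
`(t̄₀, ⟨·⟩)_term`, every maximal subsequence of consecutive transitions that
consists solely of instances of rule (1) has length at most `|t̄₀|`. -/
theorem rule1_run_length_bound
    (t₀ : Term) (h₀ : InitialTerm t₀)
    (c : Config) (e : List Rule)
    (hexec : Exec ⟨t₀, ECtx.hole, Tag.term⟩ e c)
    (pre block post : List Rule)
    (hsplit : e = pre ++ block ++ post)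
    (hblock : ∀ r ∈ block, r = Rule.r1)
    (hpre : ∀ r, pre.getLast? = some r → r ≠ Rule.r1)
    (hpost : ∀ r, post.head? = some r → r ≠ Rule.r1) :
    block.length ≤ t₀.size := by
  subst hsplit
  obtain ⟨c₂, h₁₂, _⟩ := hexec.of_append
  obtain ⟨c₁, h₁, h₂⟩ := h₁₂.of_append
  have hinit : Config.Bounded t₀.size ⟨t₀, ECtx.hole, Tag.term⟩ := ⟨le_rfl, trivial⟩
  exact (h₂.length_r1_le hblock).trans (h₁.bounded hinit).1

end SAM
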